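/- Under the stated hypotheses on G, if n ≥ 12 then the eigenvector x satisfies x_k + x_1 > x_2 + x_{n−1}. -/

import Mathlib

open Matrix

/-- The signless Laplacian `Q(G) = D(G) + A(G)` of a finite simple graph `G`. -/
noncomputable def signlessLaplacian {V : Type*} [Fintype V] (G : SimpleGraph V) :
    Matrix V V ℝ :=
  letI := Classical.decEq V
  letI : DecidableRel G.Adj := Classical.decRel _
  Matrix.diagonal (fun v => (G.degree v : ℝ)) + G.adjMatrix ℝ

/-- The `Q`-index of `G`: the largest eigenvalue of the signless Laplacian `Q(G)`. -/
noncomputable def qIndex {V : Type*} [Fintype V] (G : SimpleGraph V) : ℝ :=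
  letI := Classical.decEq V
  sSup (spectrum ℝ (signlessLaplacian G))

/-!
Let `q` be the eigenvalue of the positive eigenvector `x`. Summing the eigenvalue equation over the
neighbours of `v` gives `q ≥ d(v) + 1`, so `q ≥ 10` because `d(v_k) ≥ 9`. Moreover `x` is monotone
along inclusion of closed neighbourhoods, so `x_3` and `x_{n-2}` are at most `x_k`. With these
bounds, the eigenvalue equations at `v_0`, `v_1`, `v_2`, `v_{n-1}` become four linear inequalities
that already force `x_2 + x_{n-1} < x_k`.
-/

section PositiveEigenvector

variable {V : Type*} [Fintype V] {G : SimpleGraph V} {x : V → ℝ} {q : ℝ} {u v : V}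

theorem signlessLaplacian_mulVec_apply [DecidableRel G.Adj] (x : V → ℝ) (v : V) :
    (signlessLaplacian G *ᵥ x) v = ∑ w ∈ G.neighborFinset v, (x v + x w) := by
  classical
  simp only [signlessLaplacian, add_mulVec, Pi.add_apply, mulVec_diagonal,
    SimpleGraph.adjMatrix_mulVec_apply, Finset.sum_add_distrib, Finset.sum_const,
    SimpleGraph.card_neighborFinset_eq_degree, nsmul_eq_mul]
  congr!

theorem eigenvalue_mul_eq_sum_neighborFinset [DecidableRel G.Adj]
    (hx : signlessLaplacian G *ᵥ x = q • x) (v : V) :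
    q * x v = ∑ w ∈ G.neighborFinset v, (x v + x w) := by
  rw [← signlessLaplacian_mulVec_apply, hx, Pi.smul_apply, smul_eq_mul]

theorem eigenvalue_mul_le_sum_of_neighborSet_subset_range {ι : Type*} [Fintype ι]
    (hx : signlessLaplacian G *ᵥ x = q • x) (hnonneg : ∀ w, 0 ≤ x w) (f : ι → V)
    (hf : G.neighborSet v ⊆ Set.range f) :
    q * x v ≤ ∑ i, (x v + x (f i)) := by
  classical
  have hterm : ∀ w, 0 ≤ x v + x w := fun w => add_nonneg (hnonneg v) (hnonneg w)
  calc q * x v = ∑ w ∈ G.neighborFinset v, (x v + x w) :=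
        eigenvalue_mul_eq_sum_neighborFinset hx v
    _ ≤ ∑ w ∈ Finset.univ.image f, (x v + x w) :=
        Finset.sum_le_sum_of_subset_of_nonneg
          (fun w hw => by simpa using hf ((G.mem_neighborFinset v w).1 hw))
          fun w _ _ => hterm w
    _ ≤ ∑ i, (x v + x (f i)) := Finset.sum_image_le_of_nonneg fun w _ => hterm w

theorem add_le_eigenvalue_mul_of_adj (hx : signlessLaplacian G *ᵥ x = q • x)
    (hnonneg : ∀ w, 0 ≤ x w) (huv : G.Adj u v) : x u + x v ≤ q * x u := by
  classical
  rw [eigenvalue_mul_eq_sum_neighborFinset hx u]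
  exact Finset.single_le_sum (f := fun w => x u + x w)
    (fun w _ => add_nonneg (hnonneg u) (hnonneg w)) ((G.mem_neighborFinset u v).2 huv)

theorem degree_add_one_le_eigenvalue [DecidableRel G.Adj]
    (hx : signlessLaplacian G *ᵥ x = q • x) (hpos : ∀ w, 0 < x w) (hv : 0 < G.degree v) :
    (G.degree v : ℝ) + 1 ≤ q := by
  have hnonneg : ∀ w, 0 ≤ x w := fun w => (hpos w).le
  obtain ⟨w, hvw⟩ := (G.degree_pos_iff_exists_adj v).1 hv
  have hqv : 0 < q * x v :=
    (add_pos (hpos v) (hpos w)).trans_le (add_le_eigenvalue_mul_of_adj hx hnonneg hvw)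
  have hterm : ∀ u ∈ G.neighborFinset v, q * x v ≤ (q - 1) * (x v + x u) := fun u hu => by
    linarith [add_le_eigenvalue_mul_of_adj hx hnonneg ((G.mem_neighborFinset v u).1 hu).symm]
  have hsum : (G.degree v : ℝ) * (q * x v) ≤ (q - 1) * (q * x v) := by
    calc (G.degree v : ℝ) * (q * x v)
        ≤ ∑ u ∈ G.neighborFinset v, (q - 1) * (x v + x u) := by
          rw [← nsmul_eq_mul, ← G.card_neighborFinset_eq_degree]
          exact Finset.card_nsmul_le_sum _ _ _ hterm
      _ = (q - 1) * (q * x v) := by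
          rw [← Finset.mul_sum, ← eigenvalue_mul_eq_sum_neighborFinset hx v]
  linarith [le_of_mul_le_mul_right hsum hqv]

theorem degree_le_eigenvalue [DecidableRel G.Adj]
    (hx : signlessLaplacian G *ᵥ x = q • x) (hpos : ∀ w, 0 < x w) (v : V) :
    (G.degree v : ℝ) ≤ q := by
  refine le_of_mul_le_mul_right ?_ (hpos v)
  rw [eigenvalue_mul_eq_sum_neighborFinset hx v, ← nsmul_eq_mul,
    ← G.card_neighborFinset_eq_degree]
  exact Finset.card_nsmul_le_sum _ _ _ fun w _ => by linarith [hpos w]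

theorem le_of_insert_neighborSet_subset (hx : signlessLaplacian G *ᵥ x = q • x)
    (hpos : ∀ w, 0 < x w)
    (huv : insert u (G.neighborSet u) ⊆ insert v (G.neighborSet v)) : x u ≤ x v := by
  classical
  have hclosed : ∀ w, ∑ z ∈ insert w (G.neighborFinset w), (x w + x z) = (q + 2) * x w := by
    intro w
    rw [Finset.sum_insert (G.notMem_neighborFinset_self w),
      ← eigenvalue_mul_eq_sum_neighborFinset hx]
    ring
  have hsub : insert u (G.neighborFinset u) ⊆ insert v (G.neighborFinset v) := by
    simpa [← Finset.coe_subset] using huv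
  have hbound : (q + 2) * x u ≤ (q + 2) * x v + (G.degree v + 1) * (x u - x v) := by
    calc (q + 2) * x u
        ≤ ∑ z ∈ insert v (G.neighborFinset v), (x u + x z) := by
          rw [← hclosed]
          exact Finset.sum_le_sum_of_subset_of_nonneg hsub
            fun z _ _ => (add_pos (hpos u) (hpos z)).le
      _ = ∑ z ∈ insert v (G.neighborFinset v), ((x v + x z) + (x u - x v)) :=
          Finset.sum_congr rfl fun z _ => by ring
      _ = (q + 2) * x v + (G.degree v + 1) * (x u - x v) := by
          rw [Finset.sum_add_distrib, hclosed, Finset.sum_const, nsmul_eq_mul,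
            Finset.card_insert_of_notMem (G.notMem_neighborFinset_self v),
            G.card_neighborFinset_eq_degree, Nat.cast_add_one]
  have hgap : 0 < q + 1 - G.degree v := by linarith [degree_le_eigenvalue hx hpos v]
  refine sub_nonpos.1 (nonpos_of_mul_nonpos_right ?_ hgap)
  linarith

end PositiveEigenvector

theorem degree_eq_sub_of_neighborSet_eq {n : ℕ} {G : SimpleGraph (Fin n)} [DecidableRel G.Adj]
    {a v : Fin n} (hav : a ≤ v) (hv : G.neighborSet v = Set.Ici a \ {v}) :
    G.degree v = n - a - 1 := by
  have hN : G.neighborFinset v = (Finset.Ici a).erase v := by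
    simpa [← Finset.coe_inj] using hv
  rw [← G.card_neighborFinset_eq_degree, hN,
    Finset.card_erase_of_mem (Finset.mem_Ici.2 hav), Fin.card_Ici]

theorem insert_neighborSet_subset_of_Ici_subset {V : Type*} [LinearOrder V] {G : SimpleGraph V}
    {a u v : V} (hv : Set.Ici a ⊆ insert v (G.neighborSet v)) (hau : a ≤ u)
    (hu : ∀ w < a, ¬ G.Adj w u) :
    insert u (G.neighborSet u) ⊆ insert v (G.neighborSet v) := by
  refine Set.Subset.trans (Set.insert_subset hau fun w hw => ?_) hv
  exact not_lt.1 fun hwa => hu w hwa hw.symm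

/-- The vertices `vₗ` and `vₘ` stand for `v_{n-1}` and `v_{n-2}`. -/
theorem stmt_10_general {V : Type*} [Fintype V] {G : SimpleGraph V} [DecidableRel G.Adj]
    {x : V → ℝ} {q : ℝ} (hx : signlessLaplacian G *ᵥ x = q • x) (hpos : ∀ w, 0 < x w)
    {v₀ v₁ v₂ v₃ vₖ vₘ vₗ : V}
    (h₀ : G.neighborSet v₀ ⊆ {v₁, vₗ})
    (h₁ : G.neighborSet v₁ ⊆ {v₀, v₂, vₗ})
    (h₂ : G.neighborSet v₂ ⊆ {v₁, v₃, vₖ, vₗ})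
    (hₗ : G.neighborSet vₗ ⊆ {v₀, v₁, v₂, vₖ, vₘ})
    (h₃ : insert v₃ (G.neighborSet v₃) ⊆ insert vₖ (G.neighborSet vₖ))
    (hₘ : insert vₘ (G.neighborSet vₘ) ⊆ insert vₖ (G.neighborSet vₖ))
    (hdeg : 9 ≤ G.degree vₖ) :
    x v₂ + x vₗ < x vₖ := by
  have hq : 10 ≤ q := by
    have hdeg' : (9 : ℝ) ≤ G.degree vₖ := by exact_mod_cast hdeg
    linarith [degree_add_one_le_eigenvalue hx hpos (v := vₖ) (by omega)]
  have hten : ∀ w, 10 * x w ≤ q * x w := fun w => mul_le_mul_of_nonneg_right hq (hpos w).le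
  have hx₃ : x v₃ ≤ x vₖ := le_of_insert_neighborSet_subset hx hpos h₃
  have hxₘ : x vₘ ≤ x vₖ := le_of_insert_neighborSet_subset hx hpos hₘ
  have hrow {m : ℕ} {w : V} (f : Fin m → V) (hf : G.neighborSet w ⊆ Set.range f) :
      10 * x w ≤ ∑ i, (x w + x (f i)) :=
    (hten w).trans <|
      eigenvalue_mul_le_sum_of_neighborSet_subset_range hx (fun z => (hpos z).le) f hf
  have row₀ : 8 * x v₀ ≤ x v₁ + x vₗ := by
    have := hrow ![v₁, vₗ] (h₀.trans (by simp [Set.insert_subset_iff]))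
    simp only [Fin.sum_univ_two, Matrix.cons_val] at this
    linarith
  have row₁ : 7 * x v₁ ≤ x v₀ + x v₂ + x vₗ := by
    have := hrow ![v₀, v₂, vₗ] (h₁.trans (by simp [Set.insert_subset_iff]))
    simp only [Fin.sum_univ_three, Matrix.cons_val] at this
    linarith
  have row₂ : 6 * x v₂ ≤ x v₁ + 2 * x vₖ + x vₗ := by
    have := hrow ![v₁, v₃, vₖ, vₗ] (h₂.trans (by simp [Set.insert_subset_iff]))
    simp only [Fin.sum_univ_four, Matrix.cons_val] at this
    linarith
  have rowₗ : 5 * x vₗ ≤ x v₀ + x v₁ + x v₂ + 2 * x vₖ := by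
    have := hrow ![v₀, v₁, v₂, vₖ, vₘ] (hₗ.trans (by simp [Set.insert_subset_iff]))
    simp only [Fin.sum_univ_five, Matrix.cons_val] at this
    linarith
  linarith [hpos vₖ]

/-- for the maximal outer-planar graph of type `D_1` with `Δ = n - 3`,
if `n ≥ 12` then the Perron eigenvector satisfies `x_k + x_1 > x_2 + x_{n-1}`. -/
theorem stmt_10 (n k : ℕ) (hn : 7 ≤ n) (hk1 : 4 ≤ k) (hk2 : k ≤ n - 3)
    (G : SimpleGraph (Fin n))
    (h0 : G.neighborSet ⟨0, by omega⟩ = {⟨1, by omega⟩, ⟨n - 1, by omega⟩})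
    (h1 : G.neighborSet ⟨1, by omega⟩ =
      {⟨0, by omega⟩, ⟨2, by omega⟩, ⟨n - 1, by omega⟩})
    (h2 : G.neighborSet ⟨2, by omega⟩ =
      {⟨1, by omega⟩, ⟨3, by omega⟩, ⟨k, by omega⟩, ⟨n - 1, by omega⟩})
    (hlast : G.neighborSet ⟨n - 1, by omega⟩ =
      {⟨0, by omega⟩, ⟨1, by omega⟩, ⟨2, by omega⟩, ⟨k, by omega⟩, ⟨n - 2, by omega⟩})
    (hk' : G.neighborSet ⟨k, by omega⟩ =
      {u : Fin n | 2 ≤ u.val ∧ u ≠ ⟨k, by omega⟩})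
    (x : Fin n → ℝ) (hpos : ∀ i, 0 < x i)
    (heig : (signlessLaplacian G).mulVec x = qIndex G • x)
    (hn12 : 12 ≤ n) :
    x ⟨2, by omega⟩ + x ⟨n - 1, by omega⟩ < x ⟨k, by omega⟩ + x ⟨1, by omega⟩ := by
  classical
  set K : Fin n := ⟨k, by omega⟩
  have hN : G.neighborSet K = Set.Ici ⟨2, by omega⟩ \ {K} := hk'
  have hdeg : 9 ≤ G.degree K := by
    rw [degree_eq_sub_of_neighborSet_eq (Fin.mk_le_mk.2 (by omega)) hN]
    dsimp only
    omega
  have hclosed : Set.Ici ⟨2, by omega⟩ ⊆ insert K (G.neighborSet K) := by simp [hN]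
  have hdom (u : Fin n) (hu : 3 ≤ u.val) (hu' : u.val ≤ n - 2) :
      insert u (G.neighborSet u) ⊆ insert K (G.neighborSet K) := by
    refine insert_neighborSet_subset_of_Ici_subset hclosed (Fin.mk_le_of_le_val (by omega)) ?_
    intro w hw (hwu : u ∈ G.neighborSet w)
    have hw01 : w = ⟨0, by omega⟩ ∨ w = ⟨1, by omega⟩ := by
      simp only [Fin.ext_iff, Fin.lt_def] at hw ⊢
      omega
    rcases hw01 with hw_eq | hw_eq <;>
      simp only [hw_eq, h0, h1, Set.mem_insert_iff, Set.mem_singleton_iff, Fin.ext_iff] at hwu <;>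
      omega
  have hlt := stmt_10_general heig hpos h0.subset h1.subset h2.subset hlast.subset
    (hdom _ le_rfl (by dsimp only; omega)) (hdom _ (by dsimp only; omega) le_rfl) hdeg
  linarith [hpos ⟨1, by omega⟩]
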